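/- Let n ≥ 1 and k ≥ 0, and let f be a holomorphic function on {t ∈ ℂⁿ : t_i ≠ 0 for all i} × ℂᵏ that is not identically zero. Suppose that for each j ∈ {1, …, n} there exists an integer ℓ_j such that the function (t, w) ↦ t_j^{−ℓ_j} f(t, w) extends holomorphically to {t ∈ ℂⁿ : t_i ≠ 0 for all i ≠ j} × ℂᵏ. Then there exists a (unique) vector ℓ⃗_f ∈ ℤⁿ such that, for every ℓ⃗ ∈ ℤⁿ, the function (t, w) ↦ t₁^{−ℓ₁}⋯tₙ^{−ℓₙ} f(t, w) extends holomorphically to ℂⁿ × ℂᵏ if and only if ℓ_j ≤ (ℓ⃗_f)_j for every j. -/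

import Mathlib

/-!
The function is extended across one coordinate hyperplane at a time. On a dense set of lines
transverse to the hyperplane it has a limit at the missing point, so it equals the Cauchy integral
of its values on the unit circle. That integral only involves values off the hyperplane and depends
analytically on the line, so by density it extends the function across the hyperplane. Hence
`t^{-ℓ} f` extends if and only if each `t_j^{-ℓ_j} f` extends across the generic points of
`t_j = 0`. The admissible `ℓ_j` form a down-closed set of integers, bounded above by the order of
`f` on a line on which it does not vanish identically; the largest is the `j`-th entry of the
`ℓ`-vector.
-/

open Filter Topology Set MeasureTheory
open scoped NNReal ENNReal

section ParametricIntegral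

variable {𝕜 α E V : Type*} [RCLike 𝕜] [NormedAddCommGroup E] [NormedSpace 𝕜 E]
  [NormedAddCommGroup V] [NormedSpace 𝕜 V]

lemma exists_forall_norm_changeOrigin_mul_pow_le (p : FormalMultilinearSeries 𝕜 E V) {r r' : ℝ≥0}
    (h : (r + r' : ℝ≥0∞) < p.radius) :
    ∃ C : ℝ, ∀ y, ‖y‖₊ ≤ r → ∀ n, ‖p.changeOrigin y n‖ * (r' : ℝ) ^ n ≤ C := by
  have hr : (r : ℝ≥0∞) < p.radius := le_self_add.trans_lt h
  set A : ℕ → ℝ≥0 := fun n => ∑' s : Σ l : ℕ, { s : Finset (Fin (n + l)) // s.card = l },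
    ‖p (n + s.1)‖₊ * r ^ s.1 * r' ^ n
  have hA : Summable A := (NNReal.summable_sigma.1 (p.changeOriginSeries_summable_aux₁ h)).2
  have hle (y : E) (hy : ‖y‖₊ ≤ r) (n : ℕ) : ‖p.changeOrigin y n‖₊ * r' ^ n ≤ A n := by
    have hsum := p.changeOriginSeries_summable_aux₂ hr n
    have hterm (s : Σ l : ℕ, { s : Finset (Fin (n + l)) // s.card = l }) :
        ‖p (n + s.1)‖₊ * ‖y‖₊ ^ s.1 ≤ ‖p (n + s.1)‖₊ * r ^ s.1 := by gcongr
    calc ‖p.changeOrigin y n‖₊ * r' ^ n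
        ≤ (∑' s : Σ l : ℕ, { s : Finset (Fin (n + l)) // s.card = l },
            ‖p (n + s.1)‖₊ * ‖y‖₊ ^ s.1) * r' ^ n := by
          gcongr
          exact p.nnnorm_changeOrigin_le n ((ENNReal.coe_le_coe.2 hy).trans_lt hr)
      _ ≤ (∑' s : Σ l : ℕ, { s : Finset (Fin (n + l)) // s.card = l },
            ‖p (n + s.1)‖₊ * r ^ s.1) * r' ^ n := by
          gcongr ?_ * _
          exact Summable.tsum_le_tsum hterm (NNReal.summable_of_le hterm hsum) hsum
      _ = A n := (NNReal.tsum_mul_right _ _).symm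
  exact ⟨(∑' n, A n : ℝ≥0), fun y hy n =>
    mod_cast (hle y hy n).trans (hA.le_tsum n fun _ _ => zero_le)⟩

lemma hasFPowerSeriesOnBall_integral [NormedSpace ℝ V] [MeasurableSpace α] {μ : Measure α}
    [IsFiniteMeasure μ] {F : α → E → V} {p : α → FormalMultilinearSeries 𝕜 E V} {x : E} {r : ℝ≥0}
    {C : ℝ} (hr : 0 < r) (hF : ∀ᵐ a ∂μ, HasFPowerSeriesOnBall (F a) (p a) x r)
    (hp : ∀ n, AEStronglyMeasurable (fun a => p a n) μ)
    (hC : ∀ᵐ a ∂μ, ∀ n, ‖p a n‖ * (r : ℝ) ^ n ≤ C) :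
    HasFPowerSeriesOnBall (fun y => ∫ a, F a y ∂μ) (fun n => ∫ a, p a n ∂μ) x r := by
  have hr' : (0 : ℝ) < r := hr
  have hbound (n : ℕ) : ∀ᵐ a ∂μ, ‖p a n‖ ≤ C / (r : ℝ) ^ n := by
    filter_upwards [hC] with a ha using (le_div_iff₀ (by positivity)).2 (ha n)
  have hint (n : ℕ) : Integrable (fun a => p a n) μ := .of_bound (hp n) _ (hbound n)
  refine ⟨?_, by exact_mod_cast hr, fun {v} hv => ?_⟩
  · refine FormalMultilinearSeries.le_radius_of_bound _ (C * μ.real univ) fun n => ?_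
    calc ‖∫ a, p a n ∂μ‖ * (r : ℝ) ^ n ≤ C / (r : ℝ) ^ n * μ.real univ * (r : ℝ) ^ n := by
          gcongr
          exact norm_integral_le_of_norm_le_const (hbound n)
      _ = C * μ.real univ := by field_simp
  · have hv' : ‖v‖ < r := by simpa using hv
    simp only [ContinuousMultilinearMap.integral_apply (hint _)]
    refine hasSum_integral_of_dominated_convergence (fun n _ => C * (‖v‖ / r) ^ n)
      (fun n => ?_) (fun n => ?_) (.of_forall fun _ => ?_) (integrable_const _) ?_
    · exact (ContinuousMultilinearMap.apply 𝕜 (fun _ : Fin n => E) V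
        fun _ => v).continuous.comp_aestronglyMeasurable (hp n)
    · filter_upwards [hbound n] with a ha
      calc ‖p a n fun _ => v‖ ≤ ‖p a n‖ * ‖v‖ ^ n := by
            simpa using (p a n).le_opNorm fun _ => v
        _ ≤ C / (r : ℝ) ^ n * ‖v‖ ^ n := by gcongr
        _ = C * (‖v‖ / r) ^ n := by rw [div_pow]; ring
    · exact .mul_left _ (summable_geometric_of_lt_one (by positivity) ((div_lt_one hr').2 hv'))
    · filter_upwards [hF] with a ha using ha.hasSum hv

variable [CompleteSpace V] [TopologicalSpace α] [MeasurableSpace α]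
  [OpensMeasurableSpace α] {μ : Measure α} [IsFiniteMeasureOnCompacts μ]
  {K : Set α} {γ : α → E} {G : E → V}

lemma eventually_integrableOn_add [T2Space α] (hK : IsCompact K)
    (hγ : ContinuousOn γ K) (hG : ∀ a ∈ K, AnalyticAt 𝕜 G (γ a)) :
    ∀ᶠ v in 𝓝 0, IntegrableOn (fun a => G (γ a + v)) K μ := by
  have hnear : ∀ᶠ v in 𝓝 (0 : E), ∀ y ∈ γ '' K, AnalyticAt 𝕜 G (y + v) := by
    refine (hK.image_of_continuousOn hγ).eventually_forall_of_forall_eventually ?_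
    rintro _ ⟨a, ha, rfl⟩
    have : Tendsto (fun z : E × E => z.2 + z.1) (𝓝 (0, γ a)) (𝓝 (γ a)) :=
      Continuous.tendsto' (by fun_prop) _ _ (add_zero _)
    exact this.eventually (hG a ha).eventually_analyticAt
  filter_upwards [hnear] with v hv
  refine ContinuousOn.integrableOn_compact hK fun a ha => ?_
  exact (hv _ (mem_image_of_mem γ ha)).continuousAt.comp_continuousWithinAt (f := fun a => γ a + v)
    ((hγ a ha).add_const v)

variable [NormedSpace ℝ V] [SecondCountableTopology α]

lemma exists_isOpen_analyticAt_setIntegral_add (hK : IsCompact K) (hγ : ContinuousOn γ K)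
    {a₀ : α} (ha₀ : a₀ ∈ K) (hG : AnalyticAt 𝕜 G (γ a₀)) :
    ∃ t, IsOpen t ∧ a₀ ∈ t ∧ ∀ u ⊆ t ∩ K, MeasurableSet u →
      AnalyticAt 𝕜 (fun v => ∫ a in u, G (γ a + v) ∂μ) 0 := by
  obtain ⟨P, R, hP⟩ := hG
  obtain ⟨r', hr'0, hr'R⟩ := ENNReal.lt_iff_exists_nnreal_btwn.1 hP.r_pos
  set r : ℝ≥0 := r' / 2 with hr
  have hr0 : 0 < r := half_pos (by exact_mod_cast hr'0)
  have hrr : (r + r : ℝ≥0∞) < R := by rwa [← ENNReal.coe_add, hr, add_halves]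
  obtain ⟨C, hC⟩ := exists_forall_norm_changeOrigin_mul_pow_le P (hrr.trans_le hP.r_le)
  have hnear : ∀ᶠ a in 𝓝[K] a₀, γ a - γ a₀ ∈ Metric.ball 0 (r : ℝ) := by
    filter_upwards [hγ a₀ ha₀ (Metric.ball_mem_nhds _ hr0)] with a ha
    simpa [dist_eq_norm] using ha
  obtain ⟨t, ht, ha₀t, htγ⟩ := mem_nhdsWithin.1 hnear
  refine ⟨t, ht, ha₀t, fun u hu hum => ?_⟩
  have : IsFiniteMeasure (μ.restrict u) := isFiniteMeasure_restrict.2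
    ((measure_mono fun a ha => (hu ha).2).trans_lt hK.measure_lt_top).ne
  have hball (a : α) (ha : a ∈ u) : ‖γ a - γ a₀‖₊ < r := by
    simpa [← NNReal.coe_lt_coe] using htγ (hu ha)
  -- Re-expanding `G` at `γ a` gives power series in `v` whose radii have the common bound `r`.
  have hseries (a : α) (ha : a ∈ u) :
      HasFPowerSeriesOnBall (fun v => G (γ a + v)) (P.changeOrigin (γ a - γ a₀)) 0 r := by
    have h := hP.changeOrigin ((ENNReal.coe_lt_coe.2 (hball a ha)).trans (le_self_add.trans_lt hrr))
    rw [add_sub_cancel] at h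
    have hradius : (r : ℝ≥0∞) ≤ R - ‖γ a - γ a₀‖₊ :=
      ENNReal.le_sub_of_add_le_left ENNReal.coe_ne_top <| le_trans
        (by gcongr; exact (hball a ha).le) hrr.le
    simpa [add_comm] using (h.mono (by simpa using hr0) hradius).comp_sub (-γ a)
  have hmeas (n : ℕ) :
      AEStronglyMeasurable (fun a => P.changeOrigin (γ a - γ a₀) n) (μ.restrict u) := by
    refine ContinuousOn.aestronglyMeasurable ?_ hum
    refine (P.hasFPowerSeriesOnBall_changeOrigin n (hP.r_pos.trans_le hP.r_le)).continuousOn.comp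
      ((hγ.mono fun a ha => (hu ha).2).sub continuousOn_const) fun a ha => ?_
    simpa [enorm_eq_nnnorm] using (ENNReal.coe_lt_coe.2 (hball a ha)).trans
      ((le_self_add.trans_lt hrr).trans_le hP.r_le)
  exact (hasFPowerSeriesOnBall_integral hr0
    ((ae_restrict_iff' hum).2 (.of_forall hseries)) hmeas
    ((ae_restrict_iff' hum).2 (.of_forall fun a ha => hC _ (hball a ha).le))).analyticAt

lemma analyticAt_setIntegral_add [T2Space α] (hK : IsCompact K)
    (hγ : ContinuousOn γ K) (hG : ∀ a ∈ K, AnalyticAt 𝕜 G (γ a)) :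
    AnalyticAt 𝕜 (fun v => ∫ a in K, G (γ a + v) ∂μ) 0 := by
  have hint := eventually_integrableOn_add (μ := μ) hK hγ hG
  -- Quantifying over all measurable `u` lets two overlapping pieces be made disjoint.
  suffices ∃ t, MeasurableSet t ∧ K ⊆ t ∧ ∀ u ⊆ t ∩ K, MeasurableSet u →
      AnalyticAt 𝕜 (fun v => ∫ a in u, G (γ a + v) ∂μ) 0 by
    obtain ⟨t, -, hKt, ht⟩ := this
    exact ht K (subset_inter hKt Subset.rfl) hK.measurableSet
  refine hK.induction_on
    (p := fun s => ∃ t, MeasurableSet t ∧ s ⊆ t ∧ ∀ u ⊆ t ∩ K, MeasurableSet u →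
      AnalyticAt 𝕜 (fun v => ∫ a in u, G (γ a + v) ∂μ) 0)
    ⟨∅, .empty, Subset.rfl, fun u hu _ => ?_⟩ ?_ ?_ ?_
  · rw [empty_inter, subset_empty_iff] at hu
    simpa [hu] using analyticAt_const
  · rintro s s' hs ⟨t, htm, hst, ht⟩
    exact ⟨t, htm, hs.trans hst, ht⟩
  · rintro s₁ s₂ ⟨t₁, ht₁m, hst₁, ht₁⟩ ⟨t₂, ht₂m, hst₂, ht₂⟩
    refine ⟨t₁ ∪ t₂, ht₁m.union ht₂m, union_subset_union hst₁ hst₂, fun u hu hum => ?_⟩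
    have h₁ := ht₁ (u ∩ t₁) (fun a ha => ⟨ha.2, (hu ha.1).2⟩) (hum.inter ht₁m)
    have h₂ := ht₂ (u \ t₁) (fun a ha => ⟨(hu ha.1).1.resolve_left ha.2, (hu ha.1).2⟩)
      (hum.diff ht₁m)
    refine (h₁.add h₂).congr ?_
    filter_upwards [hint] with v hv
    exact integral_inter_add_sdiff ht₁m (hv.mono_set fun a ha => (hu ha).2)
  · intro a ha
    obtain ⟨t, ht, hat, h⟩ := exists_isOpen_analyticAt_setIntegral_add (μ := μ) hK hγ ha (hG a ha)
    exact ⟨t, mem_nhdsWithin_of_mem_nhds (ht.mem_nhds hat), t, ht.measurableSet, Subset.rfl, h⟩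

end ParametricIntegral

lemma analyticAt_circleIntegral {E V : Type*} [NormedAddCommGroup E] [NormedSpace ℂ E]
    [NormedAddCommGroup V] [NormedSpace ℂ V] [CompleteSpace V] {G : E × ℂ → V} {x₀ : E} {c : ℂ}
    {R : ℝ} (hR : 0 ≤ R) (hG : ∀ s ∈ Metric.sphere c R, AnalyticAt ℂ G (x₀, s)) :
    AnalyticAt ℂ (fun x => ∮ s in C(c, R), G (x, s)) x₀ := by
  have hint : AnalyticAt ℂ (fun v : E × ℂ => ∫ θ in Icc 0 (2 * Real.pi),
      ((circleMap c R θ + v.2 - c) * Complex.I) • G ((x₀, circleMap c R θ) + v)) 0 :=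
    analyticAt_setIntegral_add (γ := fun θ => (x₀, circleMap c R θ))
      (G := fun q : E × ℂ => ((q.2 - c) * Complex.I) • G q) isCompact_Icc (by fun_prop)
      fun θ _ => ((analyticAt_snd.sub analyticAt_const).mul analyticAt_const).smul
        (hG _ (circleMap_mem_sphere c hR θ))
  have hzero : ((x₀ - x₀, 0) : E × ℂ) = 0 := by simp
  rw [← hzero] at hint
  refine (hint.fun_comp (f := fun x => ((x - x₀, 0) : E × ℂ)) (x := x₀)
    (AnalyticAt.prod (by fun_prop) analyticAt_const)).congr (.of_forall fun x => ?_)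
  simp [circleIntegral, deriv_circleMap, intervalIntegral.integral_of_le Real.two_pi_pos.le,
    integral_Icc_eq_integral_Ioc]

section Extension

variable {E V : Type*} [NormedAddCommGroup E] [NormedSpace ℂ E] [NormedAddCommGroup V]
  [NormedSpace ℂ V] {f g : E → V} {U W W' : Set E}

/-- `f` admits an analytic extension from `U` to `W`: some function analytic on `W` agrees with `f`
on `U`. The inclusion `U ⊆ W` is not part of the definition. -/
def HasAnalyticExtension (f : E → V) (U W : Set E) : Prop :=
  ∃ F, AnalyticOnNhd ℂ F W ∧ EqOn F f U

lemma HasAnalyticExtension.congr (h : HasAnalyticExtension f U W) (hfg : EqOn f g U) :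
    HasAnalyticExtension g U W :=
  let ⟨F, hF, hFf⟩ := h
  ⟨F, hF, hFf.trans hfg⟩

lemma HasAnalyticExtension.mono_right (h : HasAnalyticExtension f U W) (hW : W' ⊆ W) :
    HasAnalyticExtension f U W' :=
  let ⟨F, hF, hFf⟩ := h
  ⟨F, hF.mono hW, hFf⟩

lemma HasAnalyticExtension.smul {a : E → ℂ} (h : HasAnalyticExtension f U W)
    (ha : AnalyticOnNhd ℂ a W) : HasAnalyticExtension (fun p => a p • f p) U W :=
  let ⟨F, hF, hFf⟩ := h
  ⟨fun p => a p • F p, ha.smul hF, fun p hp => congrArg (a p • ·) (hFf hp)⟩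

end Extension

section Line

variable {E V : Type*} [NormedAddCommGroup E] [NormedSpace ℂ E] {φ : E →L[ℂ] ℂ} {e p : E}

/-- The point of the affine line `p + ℂ e` at which the linear form `φ`, normalized by `φ e = 1`,
takes the value `s`. -/
noncomputable def linePoint (φ : E →L[ℂ] ℂ) (e p : E) (s : ℂ) : E :=
  p + (s - φ p) • e

lemma apply_linePoint (hφe : φ e = 1) (s : ℂ) : φ (linePoint φ e p s) = s := by
  simp [linePoint, hφe]

lemma linePoint_apply_self : linePoint φ e p (φ p) = p := by
  simp [linePoint]

lemma analyticAt_uncurry_linePoint (q : E × ℂ) :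
    AnalyticAt ℂ (fun q : E × ℂ => linePoint φ e q.1 q.2) q :=
  analyticAt_fst.add ((analyticAt_snd.sub (φ.analyticAt _ |>.comp analyticAt_fst)).smul
    analyticAt_const)

lemma analyticAt_linePoint (s : ℂ) : AnalyticAt ℂ (linePoint φ e p) s :=
  (analyticAt_uncurry_linePoint (p, s)).comp (analyticAt_const.prod analyticAt_id)

variable [NormedAddCommGroup V] [NormedSpace ℂ V] {U : Set E} {G : E → V}

/-- The Cauchy integral of `G` over the unit circle in the line `p + ℂ e`, parametrized by the value
of `φ`. It is the candidate for the value at `p` of the extension of `G` across `φ = 0`. -/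
noncomputable def lineCauchyIntegral (φ : E →L[ℂ] ℂ) (e : E) (G : E → V) (p : E) : V :=
  (2 * Real.pi * Complex.I : ℂ)⁻¹ • ∮ s in C(0, 1), (s - φ p)⁻¹ • G (linePoint φ e p s)

variable (hφe : φ e = 1) (hline : ∀ p ∈ U, ∀ s, linePoint φ e p s ∈ U)
  (hG : AnalyticOnNhd ℂ G (U ∩ {p | φ p ≠ 0}))
include hφe hline hG

lemma analyticAt_comp_linePoint (hp : p ∈ U) {s : ℂ} (hs : s ≠ 0) :
    AnalyticAt ℂ (fun q : E × ℂ => G (linePoint φ e q.1 q.2)) (p, s) :=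
  AnalyticAt.comp (g := G) (hG _ ⟨hline p hp s, by simpa [apply_linePoint hφe]⟩)
    (analyticAt_uncurry_linePoint _)

variable [CompleteSpace V]

lemma analyticAt_lineCauchyIntegral (hp : p ∈ U) (hφp : ‖φ p‖ < 1) :
    AnalyticAt ℂ (lineCauchyIntegral φ e G) p := by
  refine analyticAt_const.smul (analyticAt_circleIntegral
    (G := fun q => (q.2 - φ q.1)⁻¹ • G (linePoint φ e q.1 q.2)) zero_le_one fun s hs => ?_)
  have hs1 : ‖s‖ = 1 := by simpa using hs
  have hsφ : s - φ p ≠ 0 := sub_ne_zero.2 fun h => hφp.ne (h ▸ hs1)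
  have hs0 : s ≠ 0 := norm_ne_zero_iff.1 (hs1 ▸ one_ne_zero)
  exact ((analyticAt_snd.sub (φ.analyticAt _ |>.comp analyticAt_fst)).inv hsφ).smul
    (analyticAt_comp_linePoint hφe hline hG hp hs0)

lemma lineCauchyIntegral_eq_of_tendsto (hp : p ∈ U) (hφp : ‖φ p‖ < 1) (hφ0 : φ p ≠ 0) {c : V}
    (hc : Tendsto (fun s => G (linePoint φ e p s)) (𝓝[≠] 0) (𝓝 c)) :
    lineCauchyIntegral φ e G p = G p := by
  set g : ℂ → V := Function.update (fun s => G (linePoint φ e p s)) 0 c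
  have hg {s : ℂ} (hs : s ≠ 0) : g s = G (linePoint φ e p s) := Function.update_of_ne hs _ _
  have hdiff {s : ℂ} (hs : s ≠ 0) : DifferentiableAt ℂ g s := by
    have h : AnalyticAt ℂ (fun s => G (linePoint φ e p s)) s :=
      (analyticAt_comp_linePoint hφe hline hG hp hs).fun_comp (analyticAt_const.prod analyticAt_id)
    refine h.differentiableAt.congr_of_eventuallyEq ?_
    filter_upwards [eventually_ne_nhds hs] with z hz using hg hz
  have hcont (s : ℂ) : ContinuousAt g s := by
    obtain rfl | hs := eq_or_ne s 0
    · exact continuousAt_update_same.2 hc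
    · exact (hdiff hs).continuousAt
  have hcauchy :=
    Complex.two_pi_I_inv_smul_circleIntegral_sub_inv_smul_of_differentiable_on_off_countable
    (countable_singleton 0) (c := 0) (R := 1) (w := φ p) (f := g) (by simpa using hφp)
    (fun s _ => (hcont s).continuousWithinAt) fun s hs => hdiff hs.2
  rw [hg hφ0, linePoint_apply_self] at hcauchy
  rw [← hcauchy, lineCauchyIntegral]
  congr 1
  refine circleIntegral.integral_congr zero_le_one fun s hs => ?_
  have hs0 : s ≠ 0 := norm_ne_zero_iff.1 (by simp [mem_sphere_zero_iff_norm.1 hs])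
  simp only [hg hs0]

variable (hU : IsOpen U)
  (hD : Dense {p | ∃ c, Tendsto (fun s => G (linePoint φ e p s)) (𝓝[≠] 0) (𝓝 c)})
include hU hD

lemma lineCauchyIntegral_eq_of_dense (hp : p ∈ U) (hφp : ‖φ p‖ < 1) (hφ0 : φ p ≠ 0) :
    lineCauchyIntegral φ e G p = G p := by
  have hnear : ∀ᶠ q in 𝓝 p, q ∈ U ∧ ‖φ q‖ < 1 ∧ φ q ≠ 0 :=
    (hU.eventually_mem hp).and <| ((φ.continuous.norm.tendsto p).eventually_lt_const hφp).and
      (φ.continuous.continuousAt.eventually_ne hφ0)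
  refine tendsto_nhds_unique_of_frequently_eq
    (analyticAt_lineCauchyIntegral hφe hline hG hp hφp).continuousAt
    (hG p ⟨hp, hφ0⟩).continuousAt ((mem_closure_iff_frequently.1 (hD p)).and_eventually hnear
      |>.mono ?_)
  rintro q ⟨⟨c, hc⟩, hq, hφq, hφq0⟩
  exact lineCauchyIntegral_eq_of_tendsto hφe hline hG hq hφq hφq0 hc

theorem hasAnalyticExtension_of_dense_tendsto : HasAnalyticExtension G (U ∩ {p | φ p ≠ 0}) U := by
  classical
  set F : E → V := fun p => if φ p = 0 then lineCauchyIntegral φ e G p else G p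
  refine ⟨F, fun p hp => ?_, fun p hp => if_neg hp.2⟩
  by_cases hφ0 : φ p = 0
  · have hφp : ‖φ p‖ < 1 := by simp [hφ0]
    refine (analyticAt_lineCauchyIntegral hφe hline hG hp hφp).congr ?_
    filter_upwards [hU.eventually_mem hp,
      (φ.continuous.norm.tendsto p).eventually_lt_const hφp] with q hq hφq
    by_cases hφq0 : φ q = 0
    · exact (if_pos hφq0).symm
    · exact (lineCauchyIntegral_eq_of_dense hφe hline hG hU hD hq hφq hφq0).trans
        (if_neg hφq0).symm
  · refine (hG p ⟨hp, hφ0⟩).congr ?_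
    filter_upwards [φ.continuous.continuousAt.eventually_ne hφ0] with q hq using (if_neg hq).symm

end Line

section RegularLocus

variable {E V ι : Type*} [NormedAddCommGroup E] [NormedSpace ℂ E] {π : E →L[ℂ] ι → ℂ}
  {A B : Set ι} {e p : E} {j : ι}

/-- The locus in the total space of `π : E → ℂ^ι` where every coordinate with index outside `A` is
nonzero. Thus `A = ∅` gives the complement of all coordinate hyperplanes, and `A = {j}` adds the
generic points of the hyperplane `π p j = 0`. -/
def regularLocus (π : E →L[ℂ] ι → ℂ) (A : Set ι) : Set E :=
  {p | ∀ i ∉ A, π p i ≠ 0}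

lemma regularLocus_mono (hAB : A ⊆ B) : regularLocus π A ⊆ regularLocus π B :=
  fun _ hp i hi => hp i fun hiA => hi (hAB hiA)

lemma regularLocus_insert_inter (hj : j ∉ A) :
    regularLocus π (insert j A) ∩ {p | π p j ≠ 0} = regularLocus π A := by
  ext p
  refine ⟨fun ⟨hp, hpj⟩ i hi => ?_,
    fun hp => ⟨regularLocus_mono (subset_insert j A) hp, hp j hj⟩⟩
  obtain rfl | hij := eq_or_ne i j
  · exact hpj
  · exact hp i (by simp [hij, hi])

lemma isOpen_regularLocus [Finite ι] : IsOpen (regularLocus π A) := by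
  simp only [regularLocus, ofPred_forall]
  exact isOpen_iInter_of_finite fun i => isOpen_iInter_of_finite fun _ =>
    isOpen_ne_fun (by fun_prop) continuous_const

lemma dense_regularLocus_empty [Finite ι] (hπ : Function.Surjective π) :
    Dense (regularLocus π ∅) := by
  have := Fintype.ofFinite ι
  have hdense : Dense (univ.pi fun _ : ι => ({0}ᶜ : Set ℂ)) :=
    dense_pi univ fun _ _ => dense_compl_singleton 0
  convert hdense.preimage (π.toLinearMap.isOpenMap_of_finiteDimensional hπ) using 1
  ext p
  simp [regularLocus]

section

variable [DecidableEq ι] (he : π e = Pi.single j 1)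
include he

lemma apply_linePoint_eq_update (s : ℂ) :
    π (linePoint (.proj j ∘L π) e p s) = Function.update (π p) j s := by
  ext i
  obtain rfl | hij := eq_or_ne i j <;> simp [linePoint, *]

lemma linePoint_mem_regularLocus (hp : p ∈ regularLocus π A) (hAB : A ⊆ insert j B) {s : ℂ}
    (hs : j ∉ B → s ≠ 0) : linePoint (.proj j ∘L π) e p s ∈ regularLocus π B := by
  intro i hi
  rw [apply_linePoint_eq_update he]
  obtain rfl | hij := eq_or_ne i j
  · simpa using hs hi
  · simpa [hij] using hp i fun hiA => (hAB hiA).elim hij hi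

end

variable [Finite ι] [NormedAddCommGroup V] [NormedSpace ℂ V] [CompleteSpace V] {F g : E → V}
  (hπ : Function.Surjective π)
include hπ

lemma hasAnalyticExtension_regularLocus_insert (hj : j ∉ A)
    (hF : AnalyticOnNhd ℂ F (regularLocus π A))
    (hext : HasAnalyticExtension F (regularLocus π ∅) (regularLocus π {j})) :
    HasAnalyticExtension F (regularLocus π A) (regularLocus π (insert j A)) := by
  classical
  obtain ⟨e, he⟩ := hπ (Pi.single j 1)
  obtain ⟨H, hH, hHF⟩ := hext
  set φ : E →L[ℂ] ℂ := .proj j ∘L π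
  have hA : regularLocus π (insert j A) ∩ {p | φ p ≠ 0} = regularLocus π A :=
    regularLocus_insert_inter hj
  rw [← hA] at hF ⊢
  refine hasAnalyticExtension_of_dense_tendsto (φ := φ) (e := e) (by simp [φ, he])
    (fun p hp s => linePoint_mem_regularLocus he hp (subset_insert j _) (by simp)) hF
    isOpen_regularLocus ((dense_regularLocus_empty hπ).mono fun p hp => ?_)
  have hH0 : AnalyticAt ℂ H (linePoint φ e p 0) :=
    hH _ (linePoint_mem_regularLocus he hp (empty_subset _) (by simp))
  refine ⟨_, ((hH0.continuousAt.comp (analyticAt_linePoint 0).continuousAt).tendsto.mono_left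
    nhdsWithin_le_nhds).congr' ?_⟩
  filter_upwards [self_mem_nhdsWithin] with s hs
  exact hHF (linePoint_mem_regularLocus he hp (empty_subset _) fun _ => hs)

theorem hasAnalyticExtension_univ_of_forall (hg : AnalyticOnNhd ℂ g (regularLocus π ∅))
    (hext : ∀ j, HasAnalyticExtension g (regularLocus π ∅) (regularLocus π {j})) :
    HasAnalyticExtension g (regularLocus π ∅) univ := by
  suffices HasAnalyticExtension g (regularLocus π ∅) (regularLocus π univ) by
    simpa [regularLocus] using this
  refine Set.Finite.induction_on _ (toFinite univ) ⟨g, hg, eqOn_refl _ _⟩ fun {j A} hj _ ih => ?_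
  obtain ⟨F, hF, hFg⟩ := ih
  obtain ⟨F', hF', hF'F⟩ := hasAnalyticExtension_regularLocus_insert hπ hj hF
    ((hext j).congr hFg.symm)
  exact ⟨F', hF', (hF'F.mono (regularLocus_mono (empty_subset A))).trans hFg⟩

end RegularLocus

section Order

variable {V : Type*} [NormedAddCommGroup V] [NormedSpace ℂ V] {g F : ℂ → V} {l : ℤ} {z : ℂ}

lemma meromorphicOrderAt_eq_add_of_eqOn (hF : AnalyticAt ℂ F 0)
    (hFg : EqOn F (fun s => s ^ (-l) • g s) {0}ᶜ) :
    meromorphicOrderAt g 0 = l + meromorphicOrderAt F 0 := by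
  have hpow : MeromorphicAt (fun s : ℂ => s ^ l) 0 := .fun_zpow (.id 0) l
  have hid : meromorphicOrderAt (fun s : ℂ => s ^ l) 0 = l := by
    rw [meromorphicOrderAt_eq_int_iff hpow]
    exact ⟨1, analyticAt_const, one_ne_zero, .of_forall fun s => by simp⟩
  rw [← hid, ← meromorphicOrderAt_smul hpow hF.meromorphicAt]
  refine meromorphicOrderAt_congr ?_
  filter_upwards [self_mem_nhdsWithin] with s hs
  simp [hFg hs, smul_inv_smul₀ (zpow_ne_zero l hs)]

lemma bddAbove_setOf_hasAnalyticExtension_zpow_smul (hz : z ≠ 0) (hgz : g z ≠ 0) :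
    BddAbove {l : ℤ | HasAnalyticExtension (fun s => s ^ (-l) • g s) {0}ᶜ univ} := by
  refine ⟨(meromorphicOrderAt g 0).untop₀, fun l ⟨F, hF, hFg⟩ => ?_⟩
  have hF0 : AnalyticAt ℂ F 0 := hF 0 (mem_univ 0)
  have horder := meromorphicOrderAt_eq_add_of_eqOn hF0 hFg
  have htop : meromorphicOrderAt F 0 ≠ ⊤ := fun h => by
    have hzero : ∀ᶠ s in 𝓝[≠] 0, F s = 0 := meromorphicOrderAt_eq_top_iff.1 h
    have hFz : F z = 0 := hF.eqOn_zero_of_preconnected_of_frequently_eq_zero isPreconnected_univ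
      (mem_univ 0) hzero.frequently (mem_univ z)
    rw [hFg hz] at hFz
    exact smul_ne_zero (zpow_ne_zero _ hz) hgz hFz
  lift meromorphicOrderAt F 0 to ℤ using htop with m hm
  have hm0 : (0 : ℤ) ≤ m := by exact_mod_cast hm ▸ hF0.meromorphicOrderAt_nonneg
  rw [horder, ← WithTop.coe_add, WithTop.untop₀_coe]
  lia

end Order

section LVector

variable {E V ι : Type*} [NormedAddCommGroup E] [NormedSpace ℂ E] [NormedAddCommGroup V]
  [NormedSpace ℂ V] {π : E →L[ℂ] ι → ℂ} {f : E → V} {p : E} {i j : ι}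

lemma analyticAt_coord_zpow (hp : π p i ≠ 0) (m : ℤ) : AnalyticAt ℂ (fun p => π p i ^ m) p :=
  ((ContinuousLinearMap.proj (R := ℂ) i ∘L π).analyticAt p).fun_zpow hp

lemma bddAbove_setOf_hasAnalyticExtension_coord_zpow_smul (hπ : Function.Surjective π)
    (hp : p ∈ regularLocus π ∅) (hfp : f p ≠ 0) :
    BddAbove {l : ℤ | HasAnalyticExtension (fun p => π p j ^ (-l) • f p)
      (regularLocus π ∅) (regularLocus π {j})} := by
  classical
  obtain ⟨e, he⟩ := hπ (Pi.single j 1)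
  have hself : linePoint (.proj j ∘L π) e p (π p j) = p := linePoint_apply_self
  refine (bddAbove_setOf_hasAnalyticExtension_zpow_smul (hp j (by simp))
    (g := fun s => f (linePoint (.proj j ∘L π) e p s)) (by rwa [hself])).mono ?_
  rintro l ⟨F, hF, hFf⟩
  refine ⟨fun s => F (linePoint (.proj j ∘L π) e p s), fun s _ => ?_, fun s hs => ?_⟩
  · exact (hF _ (linePoint_mem_regularLocus he hp (empty_subset _) (by simp))).comp
      (analyticAt_linePoint s)
  · simpa [apply_linePoint_eq_update he] using
      hFf (linePoint_mem_regularLocus he hp (empty_subset _) fun _ => hs)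

lemma hasAnalyticExtension_coord_zpow_smul_of_le {l m : ℤ} (hlm : l ≤ m)
    (h : HasAnalyticExtension (fun p => π p j ^ (-m) • f p)
      (regularLocus π ∅) (regularLocus π {j})) :
    HasAnalyticExtension (fun p => π p j ^ (-l) • f p)
      (regularLocus π ∅) (regularLocus π {j}) := by
  have hpow : AnalyticOnNhd ℂ (fun p => π p j ^ (m - l)) (regularLocus π {j}) := fun p _ =>
    ((ContinuousLinearMap.proj (R := ℂ) j ∘L π).analyticAt p).zpow_nonneg (sub_nonneg.2 hlm)
  refine (h.smul hpow).congr fun p hp => ?_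
  simp only [smul_smul, ← zpow_add₀ (hp j (by simp))]
  ring_nf

lemma exists_forall_hasAnalyticExtension_coord_zpow_smul_iff_le (hπ : Function.Surjective π)
    (hf : ∃ p ∈ regularLocus π ∅, f p ≠ 0)
    (hex : ∃ l : ℤ, HasAnalyticExtension (fun p => π p j ^ (-l) • f p)
      (regularLocus π ∅) (regularLocus π {j})) :
    ∃ m : ℤ, ∀ l : ℤ, HasAnalyticExtension (fun p => π p j ^ (-l) • f p)
      (regularLocus π ∅) (regularLocus π {j}) ↔ l ≤ m := by
  obtain ⟨p, hp, hfp⟩ := hf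
  obtain ⟨b, hb⟩ := bddAbove_setOf_hasAnalyticExtension_coord_zpow_smul (j := j) hπ hp hfp
  obtain ⟨m, hm, hmax⟩ := Int.exists_greatest_of_bdd ⟨b, fun _ hl => hb hl⟩ hex
  exact ⟨m, fun l => ⟨hmax l, fun hl => hasAnalyticExtension_coord_zpow_smul_of_le hl hm⟩⟩

variable [Fintype ι]

lemma analyticOnNhd_prod_erase_coord_zpow [DecidableEq ι] (j : ι) (l : ι → ℤ) :
    AnalyticOnNhd ℂ (fun p => ∏ i ∈ Finset.univ.erase j, π p i ^ l i) (regularLocus π {j}) :=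
  fun _ hp => Finset.analyticAt_fun_prod _ fun i hi =>
    analyticAt_coord_zpow (hp i (Finset.ne_of_mem_erase hi)) (l i)

theorem hasAnalyticExtension_univ_iff_forall [CompleteSpace V] (hπ : Function.Surjective π)
    (hf : AnalyticOnNhd ℂ f (regularLocus π ∅)) (l : ι → ℤ) :
    HasAnalyticExtension (fun p => (∏ i, π p i ^ (-l i)) • f p) (regularLocus π ∅) univ ↔
      ∀ j, HasAnalyticExtension (fun p => π p j ^ (-l j) • f p)
        (regularLocus π ∅) (regularLocus π {j}) := by
  classical
  refine ⟨fun h j => ?_, fun h => hasAnalyticExtension_univ_of_forall hπ ?_ fun j => ?_⟩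
  · refine ((h.mono_right (subset_univ _)).smul
      (analyticOnNhd_prod_erase_coord_zpow j l)).congr fun p hp => ?_
    have hne : ∏ i ∈ Finset.univ.erase j, π p i ^ l i ≠ 0 :=
      Finset.prod_ne_zero_iff.2 fun i _ => zpow_ne_zero _ (hp i (by simp))
    simp only [smul_smul, ← Finset.mul_prod_erase _ _ (Finset.mem_univ j), zpow_neg,
      Finset.prod_inv_distrib]
    congr 1
    field_simp
  · exact fun p hp => (Finset.analyticAt_fun_prod _ fun i _ =>
      analyticAt_coord_zpow (hp i (by simp)) (-l i)).smul (hf p hp)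
  · refine ((h j).smul (analyticOnNhd_prod_erase_coord_zpow j fun i => -l i)).congr
      fun p _ => ?_
    simp only [smul_smul, Finset.prod_erase_mul _ _ (Finset.mem_univ j)]

theorem stmt_14_general [CompleteSpace V] (hπ : Function.Surjective π)
    (hf : AnalyticOnNhd ℂ f (regularLocus π ∅)) (hnz : ∃ p ∈ regularLocus π ∅, f p ≠ 0)
    (hex : ∀ j, ∃ l : ℤ, HasAnalyticExtension (fun p => π p j ^ (-l) • f p)
      (regularLocus π ∅) (regularLocus π {j})) :
    ∃! lf : ι → ℤ, ∀ l : ι → ℤ, HasAnalyticExtension (fun p => (∏ i, π p i ^ (-l i)) • f p)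
      (regularLocus π ∅) univ ↔ l ≤ lf := by
  choose lf hlf using fun j =>
    exists_forall_hasAnalyticExtension_coord_zpow_smul_iff_le hπ hnz (hex j)
  have hiff (l : ι → ℤ) : HasAnalyticExtension (fun p => (∏ i, π p i ^ (-l i)) • f p)
      (regularLocus π ∅) univ ↔ l ≤ lf :=
    (hasAnalyticExtension_univ_iff_forall hπ hf l).trans (forall_congr' fun j => hlf j (l j))
  exact ⟨lf, hiff, fun lf' hlf' => eq_of_forall_le_iff fun l => (hlf' l).symm.trans (hiff l)⟩

end LVector

/-- criterion (eq:Fl) for the trivial family ℂⁿ × ℂᵏ → ℂⁿ: for a nonzero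
holomorphic f on the regular part, admitting for each coordinate some extendable twist,
there is a unique ℓ-vector ℓ⃗_f ∈ ℤⁿ such that t^{−ℓ⃗} f extends holomorphically to
ℂⁿ × ℂᵏ exactly when ℓ⃗ ≤ ℓ⃗_f componentwise. -/
theorem stmt_14 (n k : ℕ) (hn : 1 ≤ n)
    (f : ((Fin n → ℂ) × (Fin k → ℂ)) → ℂ)
    (hf : AnalyticOnNhd ℂ f
      ({t : Fin n → ℂ | ∀ i, t i ≠ 0} ×ˢ (Set.univ : Set (Fin k → ℂ))))
    (hnz : ∃ p ∈ {t : Fin n → ℂ | ∀ i, t i ≠ 0} ×ˢ (Set.univ : Set (Fin k → ℂ)),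
      f p ≠ 0)
    (hex : ∀ j : Fin n, ∃ lj : ℤ, ∃ F : ((Fin n → ℂ) × (Fin k → ℂ)) → ℂ,
      AnalyticOnNhd ℂ F
        ({t : Fin n → ℂ | ∀ i, i ≠ j → t i ≠ 0} ×ˢ (Set.univ : Set (Fin k → ℂ))) ∧
      ∀ p ∈ {t : Fin n → ℂ | ∀ i, t i ≠ 0} ×ˢ (Set.univ : Set (Fin k → ℂ)),
        F p = p.1 j ^ (-lj) * f p) :
    ∃! lf : Fin n → ℤ, ∀ l : Fin n → ℤ,
      (∃ F : ((Fin n → ℂ) × (Fin k → ℂ)) → ℂ,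
        AnalyticOnNhd ℂ F (Set.univ : Set ((Fin n → ℂ) × (Fin k → ℂ))) ∧
        ∀ p ∈ {t : Fin n → ℂ | ∀ i, t i ≠ 0} ×ˢ (Set.univ : Set (Fin k → ℂ)),
          F p = (∏ i, p.1 i ^ (-(l i))) * f p) ↔ ∀ j, l j ≤ lf j := by
  have hreg (A : Set (Fin n)) : regularLocus (.fst ℂ (Fin n → ℂ) (Fin k → ℂ)) A =
      {t | ∀ i ∉ A, t i ≠ 0} ×ˢ univ := by
    ext p; simp [regularLocus]
  simpa [hreg, HasAnalyticExtension, EqOn, Pi.le_def] using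
    stmt_14_general (π := .fst ℂ (Fin n → ℂ) (Fin k → ℂ)) Prod.fst_surjective (f := f)
      (by simpa [hreg] using hf) (by simpa [hreg] using hnz)
      (by simpa [hreg, HasAnalyticExtension, EqOn] using hex)
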